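/- For every even integer r ≥ 2, there exists a weak Gallai-Schur r-coloring of [1, 9·5^((r−2)/2) − 1], and for every m ≥ 9·5^((r−2)/2) there is no weak Gallai-Schur r-coloring of [1, m]. Equivalently, the weak Gallai-Schur number WGS(r) equals 9·5^((r−2)/2) for even r ≥ 2. -/

import Mathlib

/-- A weak Gallai–Schur coloring of the interval `[1, m]` with color set `C`:
`χ` maps `[1, m]` into `C`, is surjective onto `C`, admits no monochromatic
solution of `a + b = c` with `a`, `b`, `c` pairwise distinct, and admits no
rainbow solution of `a + b = c`. -/
def WeakGS (m : ℕ) (C : Finset ℕ) (χ : ℕ → ℕ) : Prop :=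
  (∀ x ∈ Finset.Icc 1 m, χ x ∈ C) ∧
  (∀ i ∈ C, ∃ x ∈ Finset.Icc 1 m, χ x = i) ∧
  (∀ a ∈ Finset.Icc 1 m, ∀ b ∈ Finset.Icc 1 m, ∀ c ∈ Finset.Icc 1 m,
      a + b = c → a ≠ b → a ≠ c → b ≠ c → ¬(χ a = χ b ∧ χ b = χ c)) ∧
  (∀ a ∈ Finset.Icc 1 m, ∀ b ∈ Finset.Icc 1 m, ∀ c ∈ Finset.Icc 1 m,
      a + b = c → ¬(χ a ≠ χ b ∧ χ a ≠ χ c ∧ χ b ≠ χ c))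

/-- The weak Gallai–Schur number `WGS r`: the least `n` such that no weak
Gallai–Schur `r`-coloring of `[1, m]` exists for any `m ≥ n`. -/
noncomputable def WGS (r : ℕ) : ℕ :=
  sInf {n : ℕ | ∀ m, n ≤ m → ∀ χ : ℕ → ℕ, ¬ WeakGS m (Finset.Icc 1 r) χ}


/-- The upper bound recursion. -/
def gsF : ℕ → ℕ
  | 0 => 1
  | 1 => 3
  | 2 => 9
  | (r + 3) => max (2 * gsF (r + 2)) (5 * gsF (r + 1))

lemma gsF_closed (k : ℕ) : gsF (2 * k + 2) = 9 * 5 ^ k ∧ gsF (2 * k + 3) = 18 * 5 ^ k := by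
  induction k with
  | zero => simp [gsF]
  | succ k ih =>
    obtain ⟨h1, h2⟩ := ih
    have e1 : gsF (2 * (k + 1) + 2) = 9 * 5 ^ (k + 1) := by
      change max (2 * gsF (2 * k + 3)) (5 * gsF (2 * k + 2)) = _
      rw [h1, h2, pow_succ]; omega
    refine ⟨e1, ?_⟩
    change max (2 * gsF (2 * (k + 1) + 2)) (5 * gsF (2 * k + 3)) = _
    rw [e1, h2, pow_succ]; omega

lemma bool_nine (f : ℕ → Bool)
    (mono : ∀ a b, 1 ≤ a → a < b → a + b ≤ 9 → ¬(f a = f b ∧ f b = f (a + b))) : False := by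
  have h12 := mono 1 2 (by omega) (by omega) (by omega)
  have h13 := mono 1 3 (by omega) (by omega) (by omega)
  have h14 := mono 1 4 (by omega) (by omega) (by omega)
  have h15 := mono 1 5 (by omega) (by omega) (by omega)
  have h16 := mono 1 6 (by omega) (by omega) (by omega)
  have h17 := mono 1 7 (by omega) (by omega) (by omega)
  have h18 := mono 1 8 (by omega) (by omega) (by omega)
  have h23 := mono 2 3 (by omega) (by omega) (by omega)
  have h24 := mono 2 4 (by omega) (by omega) (by omega)
  have h25 := mono 2 5 (by omega) (by omega) (by omega)
  have h26 := mono 2 6 (by omega) (by omega) (by omega)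
  have h27 := mono 2 7 (by omega) (by omega) (by omega)
  have h34 := mono 3 4 (by omega) (by omega) (by omega)
  have h35 := mono 3 5 (by omega) (by omega) (by omega)
  have h36 := mono 3 6 (by omega) (by omega) (by omega)
  have h45 := mono 4 5 (by omega) (by omega) (by omega)
  clear mono
  simp only [Nat.reduceAdd] at *
  cases e1 : f 1 <;> cases e2 : f 2 <;> cases e3 : f 3 <;> cases e4 : f 4 <;>
    cases e5 : f 5 <;> simp_all

lemma bool_case (c : ℕ) (f : ℕ → Bool) (h3 : 3 ≤ c)
    (mono : ∀ a b, 1 ≤ a → a < b → a + b < c → ¬(f a = f b ∧ f b = f (a + b)))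
    (sym : ∀ x, 1 ≤ x → x < c → f x = f (c - x)) (f1 : f 1 = true) :
    (c = 3 ∧ f 2 = true) ∨ (c = 4 ∧ f 2 = false ∧ f 3 = true) ∨
    (c = 5 ∧ f 2 = false ∧ f 3 = false ∧ f 4 = true) ∨
    (c = 6 ∧ f 2 = false ∧ f 3 = true ∧ f 4 = false ∧ f 5 = true) ∨
    (c = 6 ∧ f 2 = false ∧ f 3 = false ∧ f 4 = false ∧ f 5 = true) := by
  have h9 : c ≤ 9 := by
    by_contra hc
    exact bool_nine f fun a b h1 h2 h3 => mono a b h1 h2 (by omega)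
  have h12 := mono 1 2 (by omega) (by omega)
  have h13 := mono 1 3 (by omega) (by omega)
  have h14 := mono 1 4 (by omega) (by omega)
  have h15 := mono 1 5 (by omega) (by omega)
  have h16 := mono 1 6 (by omega) (by omega)
  have h17 := mono 1 7 (by omega) (by omega)
  have h23 := mono 2 3 (by omega) (by omega)
  have h24 := mono 2 4 (by omega) (by omega)
  have h25 := mono 2 5 (by omega) (by omega)
  have h26 := mono 2 6 (by omega) (by omega)
  have h34 := mono 3 4 (by omega) (by omega)
  have h35 := mono 3 5 (by omega) (by omega)
  have s1 := sym 1 (by omega)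
  have s2 := sym 2 (by omega)
  have s3 := sym 3 (by omega)
  have s4 := sym 4 (by omega)
  clear mono sym
  cases e2 : f 2 <;> cases e3 : f 3 <;> cases e4 : f 4 <;>
    interval_cases c <;> first | grind | simp_all

/-- usable form of the sum conditions -/
lemma WeakGS.mono' {m C χ} (h : WeakGS m C χ) (a b : ℕ) (ha : 1 ≤ a) (hab : a < b)
    (hm : a + b ≤ m) : ¬(χ a = χ b ∧ χ b = χ (a + b)) :=
  h.2.2.1 a (by simp; omega) b (by simp; omega) (a + b) (by simp; omega) rfl
    (by omega) (by omega) (by omega)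

lemma WeakGS.rain' {m C χ} (h : WeakGS m C χ) (a b : ℕ) (ha : 1 ≤ a) (hb : 1 ≤ b)
    (hm : a + b ≤ m) : χ a = χ b ∨ χ a = χ (a + b) ∨ χ b = χ (a + b) := by
  have := h.2.2.2 a (by simp; omega) b (by simp; omega) (a + b) (by simp; omega) rfl
  tauto

/-- Restriction to multiples of `d`. -/
lemma WeakGS.restrict {m C χ} (h : WeakGS m C χ) (d : ℕ) (hd : 1 ≤ d) (D : Finset ℕ)
    (hD : D ⊆ C)
    (h1 : ∀ x, 1 ≤ x → d * x ≤ m → χ (d * x) ∈ D)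
    (h2 : ∀ x, 1 ≤ x → x ≤ m → ¬ d ∣ x → χ x ∉ D) :
    WeakGS (m / d) D (fun x => χ (d * x)) := by
  have key : ∀ x ∈ Finset.Icc 1 (m / d), 1 ≤ x ∧ d * x ∈ Finset.Icc 1 m := by
    intro x hx
    simp only [Finset.mem_Icc] at hx ⊢
    have := (Nat.le_div_iff_mul_le (by omega)).1 hx.2
    refine ⟨hx.1, Nat.mul_pos hd hx.1, by rw [mul_comm]; exact this⟩
  refine ⟨?_, ?_, ?_, ?_⟩
  · intro x hx
    exact h1 x (key x hx).1 (Finset.mem_Icc.1 (key x hx).2).2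
  · intro i hi
    obtain ⟨x, hx, rfl⟩ := h.2.1 i (hD hi)
    simp only [Finset.mem_Icc] at hx
    by_cases hdx : d ∣ x
    · obtain ⟨y, rfl⟩ := hdx
      refine ⟨y, ?_, rfl⟩
      simp only [Finset.mem_Icc]
      refine ⟨Nat.pos_of_ne_zero (by rintro rfl; simp at hx), ?_⟩
      rw [Nat.le_div_iff_mul_le (by omega), mul_comm]; exact hx.2
    · exact absurd hi (h2 x hx.1 hx.2 hdx)
  · intro a ha b hb c hc e n1 n2 n3
    have hd' : d ≠ 0 := by omega
    refine h.2.2.1 _ (key a ha).2 _ (key b hb).2 _ (key c hc).2 (by rw [← e]; ring) ?_ ?_ ?_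
      <;> simpa [hd']
  · intro a ha b hb c hc e
    exact h.2.2.2 _ (key a ha).2 _ (key b hb).2 _ (key c hc).2 (by rw [← e]; ring)

lemma upper_two {m C χ} (h : WeakGS m C χ) (hC : C.card = 2) : m < 9 := by
  by_contra hm
  obtain ⟨p, q, hpq, rfl⟩ := Finset.card_eq_two.1 hC
  refine bool_nine (fun x => decide (χ x = p)) fun a b h1 h2 h3 => ?_
  have hmo := h.mono' a b h1 h2 (by omega)
  have ea := h.1 a (by simp; omega)
  have eb := h.1 b (by simp; omega)
  have ec := h.1 (a + b) (by simp; omega)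
  simp only [Finset.mem_insert, Finset.mem_singleton] at ea eb ec
  grind

/-- The odd/even case. -/
lemma odd_case {m C χ} (h : WeakGS m C χ) (c : ℕ) (hc : c = 4 ∨ c = 6) (hcm : c ≤ m)
    (h21 : χ 2 ≠ χ 1) (h3 : χ 3 = χ 1) (hc1 : χ c ≠ χ 1) (hc2 : χ c ≠ χ 2)
    (h5 : c = 6 → χ 5 = χ 1) :
    ∀ k, (2 * k + 1 ≤ m → χ (2 * k + 1) = χ 1) ∧ (2 * k + 2 ≤ m → χ (2 * k + 2) ≠ χ 1) := by
  intro k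
  induction k using Nat.strong_induction_on with
  | _ k ih =>
  have odd : 2 * k + 1 ≤ m → χ (2 * k + 1) = χ 1 := by
    intro hk
    by_cases hkc : 2 * k < c
    · have : k = 0 ∨ k = 1 ∨ (k = 2 ∧ c = 6) := by omega
      rcases this with rfl | rfl | ⟨rfl, h6⟩
      · rfl
      · exact h3
      · exact h5 h6
    · have r1 := h.rain' 1 (2 * k) (by omega) (by omega) (by omega)
      have e1 := (ih (k - 1) (by omega)).2 (by omega)
      rw [show 2 * (k - 1) + 2 = 2 * k by omega] at e1
      rw [show 1 + 2 * k = 2 * k + 1 by omega] at r1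
      have r2 := h.rain' 2 (2 * k - 1) (by omega) (by omega) (by omega)
      rw [show 2 + (2 * k - 1) = 2 * k + 1 by omega] at r2
      have e2 := (ih (k - 1) (by omega)).1 (by omega)
      rw [show 2 * (k - 1) + 1 = 2 * k - 1 by omega] at e2
      have r3 := h.rain' c (2 * k + 1 - c) (by omega) (by omega) (by omega)
      rw [show c + (2 * k + 1 - c) = 2 * k + 1 by omega] at r3
      have e3 := (ih (k - c / 2) (by omega)).1 (by omega)
      rw [show 2 * (k - c / 2) + 1 = 2 * k + 1 - c by omega] at e3
      grind
  refine ⟨odd, fun hk he => ?_⟩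
  rcases Nat.eq_zero_or_pos k with rfl | hk0
  · exact h21 he
  · have := h.mono' 1 (2 * k + 1) (by omega) (by omega) (by omega)
    rw [show 1 + (2 * k + 1) = 2 * k + 2 by omega, odd (by omega), he] at this
    exact this ⟨rfl, rfl⟩

lemma five_case {m C χ} (h : WeakGS m C χ)
    (h21 : χ 2 ≠ χ 1) (h3 : χ 3 = χ 2) (h4 : χ 4 = χ 1) (h5 : χ 5 ≠ χ 1) (h52 : χ 5 ≠ χ 2) :
    ∀ k, (5 * k + 1 ≤ m → χ (5 * k + 1) = χ 1) ∧ (5 * k + 2 ≤ m → χ (5 * k + 2) = χ 2) ∧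
      (5 * k + 3 ≤ m → χ (5 * k + 3) = χ 2) ∧ (5 * k + 4 ≤ m → χ (5 * k + 4) = χ 1) ∧
      (5 * k + 5 ≤ m → χ (5 * k + 5) ≠ χ 1 ∧ χ (5 * k + 5) ≠ χ 2) := by
  intro k
  induction k with
  | zero => simp_all
  | succ k ih =>
    obtain ⟨i1, i2, i3, i4, i5⟩ := ih
    have e1 : 5 * (k + 1) + 1 ≤ m → χ (5 * (k + 1) + 1) = χ 1 := by
      intro hk
      have r1 := h.rain' 1 (5 * k + 5) (by omega) (by omega) (by omega)
      have r2 := h.rain' 2 (5 * k + 4) (by omega) (by omega) (by omega)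
      rw [show 1 + (5 * k + 5) = 5 * (k + 1) + 1 by omega] at r1
      rw [show 2 + (5 * k + 4) = 5 * (k + 1) + 1 by omega] at r2
      have := i4 (by omega)
      have := i5 (by omega)
      grind
    have e2 : 5 * (k + 1) + 2 ≤ m → χ (5 * (k + 1) + 2) = χ 2 := by
      intro hk
      have r1 := h.rain' 2 (5 * k + 5) (by omega) (by omega) (by omega)
      have r2 := h.rain' 3 (5 * k + 4) (by omega) (by omega) (by omega)
      rw [show 2 + (5 * k + 5) = 5 * (k + 1) + 2 by omega] at r1
      rw [show 3 + (5 * k + 4) = 5 * (k + 1) + 2 by omega] at r2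
      have := i4 (by omega)
      have := i5 (by omega)
      grind
    have e3 : 5 * (k + 1) + 3 ≤ m → χ (5 * (k + 1) + 3) = χ 2 := by
      intro hk
      have r1 := h.rain' 3 (5 * k + 5) (by omega) (by omega) (by omega)
      have r2 := h.rain' 1 (5 * (k + 1) + 2) (by omega) (by omega) (by omega)
      rw [show 3 + (5 * k + 5) = 5 * (k + 1) + 3 by omega] at r1
      rw [show 1 + (5 * (k + 1) + 2) = 5 * (k + 1) + 3 by omega] at r2
      have := e2 (by omega)
      have := i5 (by omega)
      grind
    have e4 : 5 * (k + 1) + 4 ≤ m → χ (5 * (k + 1) + 4) = χ 1 := by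
      intro hk
      have r1 := h.rain' 4 (5 * k + 5) (by omega) (by omega) (by omega)
      have r2 := h.rain' 1 (5 * (k + 1) + 3) (by omega) (by omega) (by omega)
      rw [show 4 + (5 * k + 5) = 5 * (k + 1) + 4 by omega] at r1
      rw [show 1 + (5 * (k + 1) + 3) = 5 * (k + 1) + 4 by omega] at r2
      have := e3 (by omega)
      have := i5 (by omega)
      grind
    refine ⟨e1, e2, e3, e4, fun hk => ?_⟩
    have m1 := h.mono' 1 (5 * (k + 1) + 4) (by omega) (by omega) (by omega)
    have m2 := h.mono' 2 (5 * (k + 1) + 3) (by omega) (by omega) (by omega)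
    rw [show 1 + (5 * (k + 1) + 4) = 5 * (k + 1) + 5 by omega] at m1
    rw [show 2 + (5 * (k + 1) + 3) = 5 * (k + 1) + 5 by omega] at m2
    have := e3 (by omega)
    have := e4 (by omega)
    grind

/-- One reduction step: with at least three colors we can pass to multiples of 2 or of 5. -/
lemma step {m C χ} (h : WeakGS m C χ) (hC : 3 ≤ C.card) (hm : 10 ≤ m) :
    (∃ D χ', D.card = C.card - 1 ∧ WeakGS (m / 2) D χ') ∨
    (∃ D χ', D.card = C.card - 2 ∧ WeakGS (m / 5) D χ') := by
  have h123 := h.mono' 1 2 (by omega) (by omega) (by omega)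
  obtain ⟨d, hd, hdA, hlt⟩ : ∃ d, (d = 2 ∨ d = 3) ∧ χ d ≠ χ 1 ∧ (d = 3 → χ 2 = χ 1) := by
    by_cases e : χ 2 = χ 1
    · exact ⟨3, by simp, by grind, fun _ => e⟩
    · exact ⟨2, by simp, e, by omega⟩
  have hA : χ 1 ∈ C := h.1 1 (by simp; omega)
  have hBC : χ d ∈ C := h.1 d (by simp; omega)
  have hex : ∃ c, 1 ≤ c ∧ c ≤ m ∧ χ c ≠ χ 1 ∧ χ c ≠ χ d := by
    have : 0 < ((C.erase (χ 1)).erase (χ d)).card := by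
      rw [Finset.card_erase_of_mem (by simp [hdA, hBC]), Finset.card_erase_of_mem hA]; omega
    obtain ⟨i, hi⟩ := Finset.card_pos.1 this
    simp only [Finset.mem_erase] at hi
    obtain ⟨x, hx, rfl⟩ := h.2.1 i hi.2.2
    simp only [Finset.mem_Icc] at hx
    exact ⟨x, hx.1, hx.2, hi.2.1, hi.1⟩
  classical
  obtain ⟨c, ⟨hc1, hcm, hcA, hcB⟩, hmin⟩ : ∃ c, (1 ≤ c ∧ c ≤ m ∧ χ c ≠ χ 1 ∧ χ c ≠ χ d) ∧
      ∀ y, y < c → ¬(1 ≤ y ∧ y ≤ m ∧ χ y ≠ χ 1 ∧ χ y ≠ χ d) :=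
    ⟨Nat.find hex, Nat.find_spec hex, fun y hy => Nat.find_min hex hy⟩
  have two : ∀ y, 1 ≤ y → y < c → χ y = χ 1 ∨ χ y = χ d := by
    intro y h1 h2
    have := hmin y h2
    by_contra hh
    exact this ⟨h1, by omega, by tauto⟩
  have hc3 : 3 ≤ c := by
    by_contra hc
    have : c = 1 ∨ c = 2 := by omega
    rcases this with rfl | rfl
    · exact hcA rfl
    · rcases hd with rfl | rfl
      · exact hcB rfl
      · exact hcA (hlt rfl)
  have hB := bool_case c (fun x => decide (χ x = χ 1)) hc3 (by
      intro a b h1 h2 h3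
      have := h.mono' a b h1 h2 (by omega)
      have := two a h1 (by omega)
      have := two b (by omega) (by omega)
      have := two (a + b) (by omega) (by omega)
      grind) (by
      intro x h1 h2
      have := h.rain' x (c - x) h1 (by omega) (by omega)
      rw [show x + (c - x) = c by omega] at this
      have := two x h1 (by omega)
      have := two (c - x) (by omega) (by omega)
      have : χ x = χ (c - x) := by grind
      simp only [this]) (by simp)
  simp only [decide_eq_true_eq, decide_eq_false_iff_not] at hB
  have hd2 : d = 2 := by
    rcases hd with rfl | rfl
    · rfl
    · have := hlt rfl
      rcases hB with hB | hB | hB | hB | hB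
      · rw [hB.1] at hcB; exact absurd rfl hcB
      all_goals exact absurd this hB.2.1
  subst hd2
  have evens : ((c = 4 ∨ c = 6) ∧ χ 3 = χ 1 ∧ (c = 6 → χ 5 = χ 1)) →
      (∃ D χ', D.card = C.card - 1 ∧ WeakGS (m / 2) D χ') := by
    rintro ⟨e1, e2, e3⟩
    have key := odd_case h c e1 hcm hdA e2 hcA hcB e3
    refine ⟨C.erase (χ 1), _, Finset.card_erase_of_mem hA,
      h.restrict 2 (by omega) _ (Finset.erase_subset _ _) ?_ ?_⟩
    · intro x hx hxm
      have := (key (x - 1)).2 (by omega)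
      rw [show 2 * (x - 1) + 2 = 2 * x by omega] at this
      exact Finset.mem_erase.2 ⟨this, h.1 _ (by simp; omega)⟩
    · intro x hx hxm hx2
      have := (key (x / 2)).1 (by omega)
      rw [show 2 * (x / 2) + 1 = x by omega] at this
      simp [this]
  rcases hB with hB | hB | hB | hB | hB
  · exact absurd hB.2 hdA
  · exact Or.inl (evens ⟨Or.inl hB.1, hB.2.2, by omega⟩)
  · right
    obtain ⟨rfl, -, e3, e4⟩ := hB
    have e3' : χ 3 = χ 2 := by have := two 3 (by omega) (by omega); tauto
    have key := five_case h hdA e3' e4 hcA hcB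
    refine ⟨(C.erase (χ 1)).erase (χ 2), _, ?_,
      h.restrict 5 (by omega) _
        ((Finset.erase_subset _ _).trans (Finset.erase_subset _ _)) ?_ ?_⟩
    · rw [Finset.card_erase_of_mem (Finset.mem_erase.2 ⟨hdA, h.1 2 (by simp; omega)⟩),
        Finset.card_erase_of_mem hA]; omega
    · intro x hx hxm
      have := (key (x - 1)).2.2.2.2 (by omega)
      rw [show 5 * (x - 1) + 5 = 5 * x by omega] at this
      exact Finset.mem_erase.2 ⟨this.2, Finset.mem_erase.2 ⟨this.1, h.1 _ (by simp; omega)⟩⟩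
    · intro x hx hxm hx2
      obtain ⟨k1, k2, k3, k4, -⟩ := key (x / 5)
      have : x = 5 * (x / 5) + 1 ∨ x = 5 * (x / 5) + 2 ∨ x = 5 * (x / 5) + 3 ∨
        x = 5 * (x / 5) + 4 := by omega
      rcases this with e | e | e | e
      · rw [← e] at k1; simp [k1 hxm]
      · rw [← e] at k2; simp [k2 hxm]
      · rw [← e] at k3; simp [k3 hxm]
      · rw [← e] at k4; simp [k4 hxm]
  · exact Or.inl (evens ⟨Or.inr hB.1, hB.2.2.1, fun _ => hB.2.2.2.2⟩)
  · exfalso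
    obtain ⟨rfl, -, e3, e4, e5⟩ := hB
    have e3' : χ 3 = χ 2 := by have := two 3 (by omega) (by omega); tauto
    have e4' : χ 4 = χ 2 := by have := two 4 (by omega) (by omega); tauto
    have a1 := h.rain' 1 6 (by omega) (by omega) (by omega)
    have a2 := h.rain' 2 5 (by omega) (by omega) (by omega)
    have a3 := h.mono' 1 7 (by omega) (by omega) (by omega)
    have a4 := h.rain' 2 6 (by omega) (by omega) (by omega)
    have a5 := h.rain' 3 5 (by omega) (by omega) (by omega)
    have a6 := h.rain' 2 7 (by omega) (by omega) (by omega)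
    have a7 := h.rain' 3 6 (by omega) (by omega) (by omega)
    have a8 := h.mono' 2 8 (by omega) (by omega) (by omega)
    have a9 := h.rain' 4 6 (by omega) (by omega) (by omega)
    have a10 := h.rain' 1 9 (by omega) (by omega) (by omega)
    simp only [Nat.reduceAdd] at *
    have v7 : χ 7 = χ 1 := by grind
    have v8 : χ 8 = χ 2 := by grind
    have v9 : χ 9 = χ 2 := by grind
    grind

lemma upper (r : ℕ) : ∀ m C χ, 1 ≤ r → C.card = r → WeakGS m C χ → m < gsF r := by
  induction r using Nat.strong_induction_on with
  | _ r ih =>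
  intro m C χ hr hC h
  match r, ih, hr, hC with
  | 1, _, _, hC =>
    by_contra hm
    simp only [gsF] at hm
    obtain ⟨p, rfl⟩ := Finset.card_eq_one.1 hC
    have e1 := h.1 1 (by simp; omega)
    have e2 := h.1 2 (by simp; omega)
    have e3 := h.1 3 (by simp; omega)
    have := h.mono' 1 2 (by omega) (by omega) (by omega)
    simp only [Finset.mem_singleton] at e1 e2 e3
    exact this ⟨e1.trans e2.symm, e2.trans e3.symm⟩
  | 2, _, _, hC => simpa [gsF] using upper_two h hC
  | (r + 3), ih, _, hC =>
    have hF : gsF (r + 3) = max (2 * gsF (r + 2)) (5 * gsF (r + 1)) := rfl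
    by_cases hm : 10 ≤ m
    · rcases step h (by omega) hm with ⟨D, χ', hD, h'⟩ | ⟨D, χ', hD, h'⟩
      · have := ih (r + 2) (by omega) _ D χ' (by omega) (by omega) h'
        omega
      · have := ih (r + 1) (by omega) _ D χ' (by omega) (by omega) h'
        omega
    · have hp : ∀ s, 2 ≤ gsF (s + 1) := by
        intro s
        rcases Nat.even_or_odd' s with ⟨k, rfl | rfl⟩
        · rcases k with _ | k
          · simp [gsF]
          · have := (gsF_closed k).2
            rw [show 2 * (k + 1) + 1 = 2 * k + 3 by ring, this]
            have : 0 < 5 ^ k := by positivity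
            omega
        · have := (gsF_closed k).1
          rw [show 2 * k + 1 + 1 = 2 * k + 2 by ring, this]
          have : 0 < 5 ^ k := by positivity
          omega
      have := hp r
      omega

/-- Lower bound coloring. -/
lemma lower (k : ℕ) : ∃ χ : ℕ → ℕ, WeakGS (9 * 5 ^ k - 1) (Finset.Icc 1 (2 * k + 2)) χ := by
  induction k with
  | zero =>
    refine ⟨fun x => if x = 1 ∨ x = 2 ∨ x = 4 ∨ x = 8 then 1 else 2, ?_⟩
    change WeakGS 8 (Finset.Icc 1 2) _
    refine ⟨by decide, by decide, ?_, ?_⟩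
    · intro a ha b hb c hc e n1 n2 n3
      simp only [Finset.mem_Icc] at ha hb hc
      subst e
      dsimp only
      split_ifs <;> omega
    · intro a ha b hb c hc e
      dsimp only
      split_ifs <;> omega
  | succ k ih =>
    obtain ⟨χ, h1, h2, h3, h4⟩ := ih
    have hpos : 0 < 5 ^ k := by positivity
    set N := 9 * 5 ^ k with hN
    have hN' : 9 * 5 ^ (k + 1) = 5 * N := by rw [hN, pow_succ]; ring
    rw [hN']
    let ψ : ℕ → ℕ := fun x => if x % 5 = 0 then χ (x / 5) else
      if x % 5 = 1 ∨ x % 5 = 4 then 2 * k + 3 else 2 * k + 4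
    have p0 : ∀ x, x % 5 = 0 → ψ x = χ (x / 5) := fun x hx => by simp [ψ, hx]
    have p1 : ∀ x, x % 5 = 1 ∨ x % 5 = 4 → ψ x = 2 * k + 3 := fun x hx => by
      have : x % 5 ≠ 0 := by omega
      simp [ψ, hx, this]
    have p2 : ∀ x, x % 5 = 2 ∨ x % 5 = 3 → ψ x = 2 * k + 4 := fun x hx => by
      have : x % 5 ≠ 0 := by omega
      have : ¬(x % 5 = 1 ∨ x % 5 = 4) := by omega
      simp [ψ, *]
    have q0 : ∀ x, x % 5 = 0 → x ∈ Finset.Icc 1 (5 * N - 1) → x / 5 ∈ Finset.Icc 1 (N - 1) := by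
      intro x hx hm
      simp only [Finset.mem_Icc] at hm ⊢
      omega
    have cls : ∀ x ∈ Finset.Icc 1 (5 * N - 1),
        (x % 5 = 0 ∧ ψ x = χ (x / 5) ∧ 1 ≤ ψ x ∧ ψ x ≤ 2 * k + 2) ∨
        ((x % 5 = 1 ∨ x % 5 = 4) ∧ ψ x = 2 * k + 3) ∨
        ((x % 5 = 2 ∨ x % 5 = 3) ∧ ψ x = 2 * k + 4) := by
      intro x hx
      have : x % 5 = 0 ∨ (x % 5 = 1 ∨ x % 5 = 4) ∨ (x % 5 = 2 ∨ x % 5 = 3) := by omega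
      rcases this with e | e | e
      · left
        have := h1 _ (q0 x e hx)
        rw [← p0 x e, Finset.mem_Icc] at this
        exact ⟨e, p0 x e, this⟩
      · exact Or.inr (Or.inl ⟨e, p1 x e⟩)
      · exact Or.inr (Or.inr ⟨e, p2 x e⟩)
    refine ⟨ψ, ?_, ?_, ?_, ?_⟩
    · intro x hx
      have := cls x hx
      simp only [Finset.mem_Icc]
      omega
    · intro i hi
      simp only [Finset.mem_Icc] at hi
      by_cases hi2 : i ≤ 2 * k + 2
      · obtain ⟨x, hx, rfl⟩ := h2 i (by simp; omega)
        simp only [Finset.mem_Icc] at hx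
        refine ⟨5 * x, by simp only [Finset.mem_Icc]; omega, ?_⟩
        rw [p0 _ (by omega)]
        congr 1
        omega
      · have : i = 2 * k + 3 ∨ i = 2 * k + 4 := by omega
        rcases this with rfl | rfl
        · exact ⟨1, by simp only [Finset.mem_Icc]; omega, p1 1 (by omega)⟩
        · exact ⟨2, by simp only [Finset.mem_Icc]; omega, p2 2 (by omega)⟩
    · intro a ha b hb c hc e n1 n2 n3 hh
      have ca := cls a ha
      have cb := cls b hb
      have cc := cls c hc
      by_cases ea : a % 5 = 0
      · have eb : b % 5 = 0 := by omega
        have ec : c % 5 = 0 := by omega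
        rw [p0 a ea, p0 b eb, p0 c ec] at hh
        exact h3 _ (q0 a ea ha) _ (q0 b eb hb) _ (q0 c ec hc) (by omega) (by omega) (by omega)
          (by omega) hh
      · omega
    · intro a ha b hb c hc e hh
      have ca := cls a ha
      have cb := cls b hb
      have cc := cls c hc
      by_cases eab : a % 5 = 0 ∧ b % 5 = 0
      · obtain ⟨ea, eb⟩ := eab
        have ec : c % 5 = 0 := by omega
        rw [p0 a ea, p0 b eb, p0 c ec] at hh
        exact h4 _ (q0 a ea ha) _ (q0 b eb hb) _ (q0 c ec hc) (by omega) hh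
      · omega

/-- For every even `r ≥ 2`, there is a weak Gallai–Schur `r`-coloring of
`[1, 9·5^((r-2)/2) - 1]`, no weak Gallai–Schur `r`-coloring of `[1, m]` exists
for any `m ≥ 9·5^((r-2)/2)`, and consequently `WGS r = 9·5^((r-2)/2)`. -/
theorem weak_WGS_even (r : ℕ) (hr : 2 ≤ r) (hre : Even r) :
    (∃ χ : ℕ → ℕ, WeakGS (9 * 5 ^ ((r - 2) / 2) - 1) (Finset.Icc 1 r) χ) ∧
    (∀ m, 9 * 5 ^ ((r - 2) / 2) ≤ m → ∀ χ : ℕ → ℕ, ¬ WeakGS m (Finset.Icc 1 r) χ) ∧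
    WGS r = 9 * 5 ^ ((r - 2) / 2) := by
  obtain ⟨j, hj⟩ := hre
  obtain ⟨k, rfl⟩ : ∃ k, r = 2 * k + 2 := ⟨j - 1, by omega⟩
  have hk : (2 * k + 2 - 2) / 2 = k := by omega
  rw [hk]
  have hlow := lower k
  have hup : ∀ m, 9 * 5 ^ k ≤ m → ∀ χ : ℕ → ℕ, ¬ WeakGS m (Finset.Icc 1 (2 * k + 2)) χ := by
    intro m hm χ h
    have := upper (2 * k + 2) m _ χ (by omega) (by simp) h
    rw [(gsF_closed k).1] at this
    omega
  refine ⟨hlow, hup, le_antisymm (Nat.sInf_le hup) ?_⟩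
  refine le_csInf ⟨_, hup⟩ fun n hn => ?_
  by_contra hlt
  obtain ⟨χ, hχ⟩ := hlow
  exact hn _ (by omega) χ hχ
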